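/- Let p_1,...,p_g be distinct primes, k_1,...,k_g ≥ 1, N = Π_{γ=1}^g p_γ^{k_γ}, and B_γ ∈ M_{t×a_γ}(ℤ/p_γ^{k_γ}ℤ) for each γ; let B over ℤ/Nℤ be the block matrix whose γ-th block of columns is the image of B_γ under the additive embedding ι_γ : ℤ/p_γ^{k_γ}ℤ → ℤ/Nℤ (sending x to the unique class congruent to x mod p_γ^{k_γ} and 0 mod p_δ^{k_δ}, δ ≠ γ). For each γ choose Q_γ ∈ GL(t, ℤ/p_γ^{k_γ}ℤ) and T_γ ∈ GL(a_γ, ℤ/p_γ^{k_γ}ℤ) so that Q_γ B_γ T_γ is in normal form with diagonal entries p_γ^{s_{γ,i}}. Let S ∈ M_t(ℤ) with det S = ±1. Then Z(SB) = Z(B) in (ℤ/Nℤ)^t if and only if for every γ and all indices i > j one has d_{p_γ}((Q_γ S̄_γ Q_γ^{-1})_{i,j}) ≥ s_{γ,i} - s_{γ,j}, where S̄_γ is the reduction of S modulo p_γ^{k_γ}. -/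

import Mathlib

open Matrix

/-!
By the Chinese remainder theorem both zero sets split into their components modulo the
`p_γ ^ k_γ`, so the question is local. There `Q_γ` and `T_γ` replace `B_γ` by a diagonal matrix `D`
with entries `p ^ s_i` and `S` by `M = Q S Q⁻¹`; now `Z(D)` is generated by the vectors
`p ^ (k - s_i) e_i`, and testing `u M D = 0` on them is the divisibility condition. This only gives
`Z(D) ⊆ Z(M D)`, that is, that `M` maps `Z(D)` into itself; equality follows because the surjective
endomorphism which `M` induces on the finitely generated quotient by `Z(D)` is injective.
-/

theorem comap_eq_of_le_comap_of_surjective {A N : Type*} [Ring A] [OrzechProperty A]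
    [AddCommGroup N] [Module A N] [Module.Finite A N] {f : N →ₗ[A] N}
    (hf : Function.Surjective f) {P : Submodule A N} (h : P ≤ P.comap f) : P.comap f = P := by
  have hsurj : Function.Surjective (P.mapQ P f h) := by
    rw [← LinearMap.range_eq_top, Submodule.range_mapQ, LinearMap.range_eq_top.2 hf,
      Submodule.map_top, Submodule.range_mkQ]
  have hinj := OrzechProperty.injective_of_surjective_endomorphism _ hsurj
  refine le_antisymm (fun x hx => ?_) h
  rw [← Submodule.Quotient.mk_eq_zero, ← map_eq_zero_iff _ hinj, Submodule.mapQ_apply]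
  exact (Submodule.Quotient.mk_eq_zero P).2 hx

section ZeroSet

/-- The zero set `Z(X)` of a matrix `X`: the row vectors `w` with `wX = 0`, as a submodule. -/
def zeroSet {R m n : Type*} [Semiring R] [Fintype m] (X : Matrix m n R) : Submodule R (m → R) :=
  LinearMap.ker X.vecMulLinear

variable {R m n : Type*} [Fintype m]

@[simp]
theorem mem_zeroSet [Semiring R] {X : Matrix m n R} {w : m → R} :
    w ∈ zeroSet X ↔ w ᵥ* X = 0 :=
  Iff.rfl

theorem zeroSet_mul [Semiring R] {l : Type*} [Fintype l] (M : Matrix l m R) (X : Matrix m n R) :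
    zeroSet (M * X) = (zeroSet X).comap M.vecMulLinear := by
  ext w
  simp [vecMul_vecMul]

theorem mem_zeroSet_diagonal [Semiring R] [DecidableEq m] {d u : m → R} :
    u ∈ zeroSet (diagonal d) ↔ ∀ i, u i * d i = 0 := by
  simp [funext_iff, vecMul_diagonal]

theorem mem_zeroSet_mul_diagonal [Semiring R] [DecidableEq m] {l : Type*} [Fintype l]
    {M : Matrix l m R} {d : m → R} {u : l → R} :
    u ∈ zeroSet (M * diagonal d) ↔ ∀ j, (u ᵥ* M) j * d j = 0 := by
  rw [zeroSet_mul, Submodule.mem_comap, vecMulLinear_apply, mem_zeroSet_diagonal]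

variable [CommRing R]

theorem zeroSet_mul_of_isUnit_det [Fintype n] [DecidableEq n] (X : Matrix m n R)
    {T : Matrix n n R} (hT : IsUnit T.det) : zeroSet (X * T) = zeroSet X := by
  ext w
  have hinj := vecMul_injective_of_isUnit ((isUnit_iff_isUnit_det T).2 hT)
  simpa [vecMul_vecMul] using hinj.eq_iff (a := w ᵥ* X) (b := 0)

variable [DecidableEq m]

theorem isUnit_det_map {A : Type*} [CommRing A] (f : R →+* A) {M : Matrix m m R}
    (hM : IsUnit M.det) : IsUnit (M.map f).det := by
  simpa only [RingHom.map_det, RingHom.mapMatrix_apply] using hM.map f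

theorem vecMulLinear_surjective_of_isUnit_det {M : Matrix m m R} (hM : IsUnit M.det) :
    Function.Surjective M.vecMulLinear :=
  vecMul_surjective_iff_isUnit.2 ((isUnit_iff_isUnit_det M).2 hM)

theorem zeroSet_mul_eq_zeroSet_mul_iff {n' : Type*} {Q : Matrix m m R} (hQ : IsUnit Q.det)
    (X : Matrix m n R) (Y : Matrix m n' R) :
    zeroSet (Q * X) = zeroSet (Q * Y) ↔ zeroSet X = zeroSet Y := by
  rw [zeroSet_mul, zeroSet_mul]
  exact (Submodule.comap_injective_of_surjective
    (vecMulLinear_surjective_of_isUnit_det hQ)).eq_iff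

theorem zeroSet_mul_eq_iff_le {M : Matrix m m R} (hM : IsUnit M.det) (X : Matrix m n R) :
    zeroSet (M * X) = zeroSet X ↔ zeroSet X ≤ zeroSet (M * X) := by
  refine ⟨ge_of_eq, fun h => ?_⟩
  rw [zeroSet_mul] at h ⊢
  exact comap_eq_of_le_comap_of_surjective (vecMulLinear_surjective_of_isUnit_det hM) h

theorem zeroSet_mul_eq_iff_conj [Fintype n] [DecidableEq n] {Q S : Matrix m m R}
    {T : Matrix n n R} (hQ : IsUnit Q.det) (hT : IsUnit T.det) (B : Matrix m n R) :
    zeroSet (S * B) = zeroSet B ↔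
      zeroSet (Q * S * Q⁻¹ * (Q * B * T)) = zeroSet (Q * B * T) := by
  have hconj : Q * S * Q⁻¹ * (Q * B * T) = Q * (S * B) * T := by
    simp only [Matrix.mul_assoc, nonsing_inv_mul_cancel_left Q _ hQ]
  rw [hconj, zeroSet_mul_of_isUnit_det _ hT, zeroSet_mul_of_isUnit_det _ hT,
    zeroSet_mul_eq_zeroSet_mul_iff hQ]

end ZeroSet

section ExactPowers

/-- `ϖ ^ k = 0` and the annihilator of `ϖ ^ (k - e)` is generated by `ϖ ^ e` for all `e ≤ k`; this
is what the local argument uses of the element `p` of `ℤ/p^k`. -/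
structure HasExactPowers {R : Type*} [CommSemiring R] (ϖ : R) (k : ℕ) : Prop where
  pow_eq_zero : ϖ ^ k = 0
  dvd_of_mul_eq_zero {e : ℕ} {x : R} : e ≤ k → ϖ ^ (k - e) * x = 0 → ϖ ^ e ∣ x

theorem HasExactPowers.map {A R : Type*} [CommRing A] [CommRing R] {f : A →+* R}
    (hf : Function.Surjective f) {a : A} (ha : a ∈ nonZeroDivisors A) {k : ℕ}
    (hker : ∀ x, f x = 0 ↔ a ^ k ∣ x) :
    HasExactPowers (f a) k where
  pow_eq_zero := by rw [← map_pow, hker]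
  dvd_of_mul_eq_zero {e x} he hx := by
    obtain ⟨y, rfl⟩ := hf x
    rw [← map_pow, ← map_mul, hker, ← pow_sub_mul_pow a he,
      dvd_cancel_left_mem_nonZeroDivisors (pow_mem ha _)] at hx
    simpa only [map_pow] using map_dvd f hx

theorem hasExactPowers_natCast_zmod {p : ℕ} (hp : p ≠ 0) (k : ℕ) :
    HasExactPowers (p : ZMod (p ^ k)) k := by
  have hker (x : ℤ) : Int.castRingHom (ZMod (p ^ k)) x = 0 ↔ (p : ℤ) ^ k ∣ x := by
    rw [eq_intCast, ZMod.intCast_zmod_eq_zero_iff_dvd, Nat.cast_pow]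
  have hp' : (p : ℤ) ∈ nonZeroDivisors ℤ := mem_nonZeroDivisors_of_ne_zero (mod_cast hp)
  simpa only [map_natCast] using HasExactPowers.map ZMod.intCast_surjective hp' hker

variable {R m : Type*} [CommSemiring R] [Fintype m] [DecidableEq m] {ϖ : R} {k : ℕ} {s : m → ℕ}

theorem zeroSet_diagonal_le_of_pow_dvd {M : Matrix m m R}
    (hM : ∀ i j, ϖ ^ (s i - s j) ∣ M i j) :
    zeroSet (diagonal fun i => ϖ ^ s i) ≤ zeroSet (M * diagonal fun i => ϖ ^ s i) := by
  intro u hu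
  rw [mem_zeroSet_diagonal] at hu
  refine mem_zeroSet_mul_diagonal.2 fun j => ?_
  rw [vecMul_eq_sum, Finset.sum_apply, Finset.sum_mul]
  refine Finset.sum_eq_zero fun i _ => ?_
  have hdvd : ϖ ^ s i ∣ M i j * ϖ ^ s j :=
    calc ϖ ^ s i ∣ ϖ ^ (s i - s j + s j) := pow_dvd_pow ϖ le_tsub_add
      _ = ϖ ^ (s i - s j) * ϖ ^ s j := pow_add ..
      _ ∣ M i j * ϖ ^ s j := mul_dvd_mul_right (hM i j) _
  have hzero : u i * (M i j * ϖ ^ s j) = 0 :=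
    zero_dvd_iff.1 (hu i ▸ mul_dvd_mul_left (u i) hdvd)
  simpa [mul_assoc] using hzero

theorem HasExactPowers.pow_dvd_of_zeroSet_diagonal_le (hϖ : HasExactPowers ϖ k)
    (hs : ∀ i, s i ≤ k) {M : Matrix m m R}
    (hM : zeroSet (diagonal fun i => ϖ ^ s i) ≤ zeroSet (M * diagonal fun i => ϖ ^ s i))
    (i j : m) : ϖ ^ (s i - s j) ∣ M i j := by
  obtain hij | hij := le_total (s i) (s j)
  · simp [Nat.sub_eq_zero_of_le hij]
  have hmem : Pi.single i (ϖ ^ (k - s i)) ∈ zeroSet (diagonal fun i => ϖ ^ s i) := by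
    refine mem_zeroSet_diagonal.2 fun i' => ?_
    obtain rfl | hi' := eq_or_ne i' i
    · rw [Pi.single_eq_same, ← pow_add, Nat.sub_add_cancel (hs i'), hϖ.pow_eq_zero]
    · rw [Pi.single_eq_of_ne hi', zero_mul]
  have hrow : ϖ ^ (k - s i) * M i j * ϖ ^ s j = 0 := by
    simpa [single_vecMul] using mem_zeroSet_mul_diagonal.1 (hM hmem) j
  have hexp : k - (s i - s j) = k - s i + s j := by have := hs i; omega
  refine hϖ.dvd_of_mul_eq_zero ((Nat.sub_le _ _).trans (hs i)) ?_
  rw [hexp, pow_add, mul_right_comm, hrow]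

theorem forall_pow_sub_dvd_iff_of_monotone {R m : Type*} [Monoid R] [LinearOrder m] {ϖ : R}
    {s : m → ℕ} (hs : Monotone s) (M : Matrix m m R) :
    (∀ i j, ϖ ^ (s i - s j) ∣ M i j) ↔ ∀ i j, j < i → ϖ ^ (s i - s j) ∣ M i j := by
  refine ⟨fun h i j _ => h i j, fun h i j => ?_⟩
  obtain hji | hij := lt_or_ge j i
  · exact h i j hji
  · simp [Nat.sub_eq_zero_of_le (hs hij)]

end ExactPowers

section NormalForm

/-- `X` is the rectangular diagonal matrix with entries `ϖ ^ s i`, where `s i ≤ k`, and every row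
with `s i < k` has its diagonal entry inside `X`. This is the normal form of the paper, except that
the exponents may come in any order. -/
structure IsPowerDiagonal {R : Type*} [Semiring R] {t a : ℕ} (ϖ : R) (k : ℕ) (s : Fin t → ℕ)
    (X : Matrix (Fin t) (Fin a) R) : Prop where
  le : ∀ i, s i ≤ k
  lt_of_lt : ∀ i, s i < k → (i : ℕ) < a
  apply : ∀ i j, X i j = if (i : ℕ) = j then ϖ ^ s i else 0

variable {R : Type*} {t a : ℕ} {ϖ : R} {k : ℕ} {s : Fin t → ℕ}

theorem IsPowerDiagonal.zeroSet_eq [Semiring R] {X : Matrix (Fin t) (Fin a) R}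
    (hX : IsPowerDiagonal ϖ k s X) (hϖ : ϖ ^ k = 0) :
    zeroSet X = zeroSet (diagonal fun i => ϖ ^ s i) := by
  ext u
  have hentry (i : Fin t) (j : Fin a) (hij : (i : ℕ) = j) : (u ᵥ* X) j = u i * ϖ ^ s i := by
    simp only [vecMul, dotProduct, hX.apply]
    rw [Fintype.sum_eq_single i fun i' hi' => by simp [← hij, Fin.val_inj, hi'], if_pos hij]
  rw [mem_zeroSet_diagonal, mem_zeroSet, funext_iff]
  constructor
  · intro h i
    obtain hi | hi := (hX.le i).lt_or_eq
    · rw [← hentry i ⟨i, hX.lt_of_lt i hi⟩ rfl, h, Pi.zero_apply]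
    · rw [hi, hϖ, mul_zero]
  · intro h j
    simp only [vecMul, dotProduct, hX.apply, mul_ite, h, mul_zero, ite_self,
      Finset.sum_const_zero, Pi.zero_apply]

theorem HasExactPowers.zeroSet_mul_eq_iff_pow_dvd [CommRing R] (hϖ : HasExactPowers ϖ k)
    {B : Matrix (Fin t) (Fin a) R} {Q S : Matrix (Fin t) (Fin t) R}
    {T : Matrix (Fin a) (Fin a) R} (hQ : IsUnit Q.det) (hT : IsUnit T.det)
    (hB : IsPowerDiagonal ϖ k s (Q * B * T)) (hS : IsUnit S.det) :
    zeroSet (S * B) = zeroSet B ↔ ∀ i j, ϖ ^ (s i - s j) ∣ (Q * S * Q⁻¹) i j := by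
  have hdet : IsUnit (Q * S * Q⁻¹).det := by
    rwa [det_conj ((isUnit_iff_isUnit_det Q).2 hQ)]
  have hZ := hB.zeroSet_eq hϖ.pow_eq_zero
  rw [zeroSet_mul_eq_iff_conj hQ hT, zeroSet_mul, hZ, ← zeroSet_mul, zeroSet_mul_eq_iff_le hdet]
  exact ⟨hϖ.pow_dvd_of_zeroSet_diagonal_le hB.le, zeroSet_diagonal_le_of_pow_dvd⟩

end NormalForm

section Block

variable {Γ m R : Type*} [DecidableEq Γ] {A : Γ → Type*} {n : Γ → Type*}

section Semiring

variable [Semiring R] [∀ γ, Semiring (A γ)]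

/-- The block matrix over `R ≃+* ∏ γ, A γ` whose `γ`-th block of columns is the image of `B γ`
under the additive embedding `e.symm ∘ Pi.single γ` of `A γ` into `R`. -/
def blockRow (e : R ≃+* ∀ γ, A γ) (B : ∀ γ, Matrix m (n γ) (A γ)) :
    Matrix m (Σ γ, n γ) R :=
  of fun i j => e.symm (Pi.single j.1 (B j.1 i j.2))

variable (e : R ≃+* ∀ γ, A γ)

theorem eq_blockRow {B : ∀ γ, Matrix m (n γ) (A γ)} {X : Matrix m (Σ γ, n γ) R}
    (hself : ∀ i γ j, e (X i ⟨γ, j⟩) γ = B γ i j)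
    (hother : ∀ i γ j δ, δ ≠ γ → e (X i ⟨γ, j⟩) δ = 0) : X = blockRow e B := by
  ext i ⟨γ, j⟩
  refine e.eq_symm_apply.2 (funext fun δ => ?_)
  obtain rfl | hδ := eq_or_ne δ γ
  · rw [hself, Pi.single_eq_same]
  · rw [hother i γ j δ hδ, Pi.single_eq_of_ne hδ]

variable [Fintype m]

theorem vecMul_blockRow (B : ∀ γ, Matrix m (n γ) (A γ)) (w : m → R) (γ : Γ) (j : n γ) :
    (w ᵥ* blockRow e B) ⟨γ, j⟩ = e.symm (Pi.single γ (((fun i => e (w i) γ) ᵥ* B γ) j)) := by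
  apply e.injective
  ext δ
  obtain rfl | hδ := eq_or_ne δ γ
  · simp [vecMul, dotProduct, blockRow]
  · simp [vecMul, dotProduct, blockRow, hδ]

theorem mem_zeroSet_blockRow {B : ∀ γ, Matrix m (n γ) (A γ)} {w : m → R} :
    w ∈ zeroSet (blockRow e B) ↔ ∀ γ, (fun i => e (w i) γ) ∈ zeroSet (B γ) := by
  simp only [mem_zeroSet, funext_iff (f := _ ᵥ* _), Sigma.forall, vecMul_blockRow, Pi.zero_apply,
    EmbeddingLike.map_eq_zero_iff, Pi.single_eq_zero_iff]

theorem single_mem_zeroSet_blockRow {B : ∀ γ, Matrix m (n γ) (A γ)} {γ : Γ} {v : m → A γ} :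
    (fun i => e.symm (Pi.single γ (v i))) ∈ zeroSet (blockRow e B) ↔ v ∈ zeroSet (B γ) := by
  simp only [mem_zeroSet_blockRow, RingEquiv.apply_symm_apply]
  refine ⟨fun hv => by simpa only [Pi.single_eq_same] using hv γ, fun hv δ => ?_⟩
  obtain rfl | hδ := eq_or_ne δ γ
  · simpa only [Pi.single_eq_same] using hv
  · simp only [Pi.single_eq_of_ne hδ]
    exact zero_mem (zeroSet (B δ))

theorem zeroSet_blockRow_eq_iff {n' : Γ → Type*} {B : ∀ γ, Matrix m (n γ) (A γ)}
    {C : ∀ γ, Matrix m (n' γ) (A γ)} :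
    zeroSet (blockRow e B) = zeroSet (blockRow e C) ↔ ∀ γ, zeroSet (B γ) = zeroSet (C γ) := by
  refine ⟨fun h γ => ?_, fun h => ?_⟩
  · ext v
    rw [← single_mem_zeroSet_blockRow e, h, single_mem_zeroSet_blockRow]
  · ext w
    simp only [mem_zeroSet_blockRow, h]

theorem mul_blockRow (S : Matrix m m R) (B : ∀ γ, Matrix m (n γ) (A γ)) :
    S * blockRow e B = blockRow e fun γ => S.map (fun x => e x γ) * B γ := by
  ext i ⟨γ, j⟩
  exact vecMul_blockRow e B (S i) γ j

end Semiring

theorem zeroSet_blockMatrix_eq_iff_dvd_general [CommRing R] [∀ γ, CommRing (A γ)]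
    (e : R ≃+* ∀ γ, A γ) {t : ℕ} {a : Γ → ℕ} {ϖ : ∀ γ, A γ} {k : Γ → ℕ}
    (hϖ : ∀ γ, HasExactPowers (ϖ γ) (k γ)) {B : ∀ γ, Matrix (Fin t) (Fin (a γ)) (A γ)}
    {Q : ∀ γ, Matrix (Fin t) (Fin t) (A γ)} {T : ∀ γ, Matrix (Fin (a γ)) (Fin (a γ)) (A γ)}
    (hQ : ∀ γ, IsUnit (Q γ).det) (hT : ∀ γ, IsUnit (T γ).det) {s : Γ → Fin t → ℕ}
    (hB : ∀ γ, IsPowerDiagonal (ϖ γ) (k γ) (s γ) (Q γ * B γ * T γ))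
    {S : Matrix (Fin t) (Fin t) R} (hS : IsUnit S.det) :
    zeroSet (S * blockRow e B) = zeroSet (blockRow e B) ↔
      ∀ γ i j, ϖ γ ^ (s γ i - s γ j) ∣ (Q γ * S.map (fun x => e x γ) * (Q γ)⁻¹) i j := by
  have hSγ (γ : Γ) : IsUnit (S.map fun x => e x γ).det :=
    isUnit_det_map ((Pi.evalRingHom A γ).comp (e : R →+* ∀ γ, A γ)) hS
  rw [mul_blockRow, zeroSet_blockRow_eq_iff]
  exact forall_congr' fun γ =>
    (hϖ γ).zeroSet_mul_eq_iff_pow_dvd (hQ γ) (hT γ) (hB γ) (hSγ γ)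

end Block

/-- The criterion for lifting an automorphism to an `A`-covering for an
arbitrary finite abelian group `A` (Theorem 3.5 of the paper): with
`N = ∏ p_γ^{k_γ}`, `B` the block matrix over `ℤ/N` built from the `B_γ` via
the additive embeddings `ι_γ`, and `Q_γ, T_γ` normalizing each `B_γ` to a
normal form with diagonal entries `p_γ^{s_{γ,i}}`, for `S ∈ M_t(ℤ)` with
`det S = ±1` one has `Z(SB) = Z(B)` iff for every `γ` and all `i > j`,
`d_{p_γ}((Q_γ S̄_γ Q_γ⁻¹)_{i,j}) ≥ s_{γ,i} - s_{γ,j}`. -/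
theorem zeroSet_blockMatrix_eq_iff_dvd {g t : ℕ} (p k : Fin g → ℕ)
    (hp : ∀ γ, (p γ).Prime) (hinj : Function.Injective p)
    (hk : ∀ γ, 1 ≤ k γ) (a : Fin g → ℕ)
    (B : (γ : Fin g) → Matrix (Fin t) (Fin (a γ)) (ZMod (p γ ^ k γ)))
    (ι : (γ : Fin g) → ZMod (p γ ^ k γ) → ZMod (∏ γ, p γ ^ k γ))
    (hι : ∀ (γ : Fin g) (x : ZMod (p γ ^ k γ)),
      ZMod.castHom (Finset.dvd_prod_of_mem (fun γ => p γ ^ k γ)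
          (Finset.mem_univ γ)) (ZMod (p γ ^ k γ)) (ι γ x) = x ∧
      ∀ δ : Fin g, δ ≠ γ →
        ZMod.castHom (Finset.dvd_prod_of_mem (fun γ => p γ ^ k γ)
          (Finset.mem_univ δ)) (ZMod (p δ ^ k δ)) (ι γ x) = 0)
    (Bbig : Matrix (Fin t) ((γ : Fin g) × Fin (a γ)) (ZMod (∏ γ, p γ ^ k γ)))
    (hB : ∀ (i : Fin t) (γ : Fin g) (j : Fin (a γ)),
      Bbig i ⟨γ, j⟩ = ι γ (B γ i j))
    (Q : (γ : Fin g) → Matrix (Fin t) (Fin t) (ZMod (p γ ^ k γ)))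
    (T : (γ : Fin g) → Matrix (Fin (a γ)) (Fin (a γ)) (ZMod (p γ ^ k γ)))
    (hQ : ∀ γ, IsUnit (Q γ).det) (hT : ∀ γ, IsUnit (T γ).det)
    (s : (γ : Fin g) → Fin t → ℕ)
    (hmono : ∀ γ, Monotone (s γ)) (hsk : ∀ γ i, s γ i ≤ k γ)
    (hl : ∀ γ, ∃ l, l ≤ min t (a γ) ∧ ∀ i : Fin t, s γ i < k γ ↔ (i : ℕ) < l)
    (hB0 : ∀ (γ : Fin g) (i : Fin t) (j : Fin (a γ)),
      (Q γ * B γ * T γ) i j = if (i : ℕ) = (j : ℕ)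
        then (p γ : ZMod (p γ ^ k γ)) ^ s γ i else 0)
    (S : Matrix (Fin t) (Fin t) ℤ) (hS : S.det = 1 ∨ S.det = -1) :
    ({w : Fin t → ZMod (∏ γ, p γ ^ k γ) |
        w ᵥ* (S.map Int.cast * Bbig) = 0} =
      {w : Fin t → ZMod (∏ γ, p γ ^ k γ) | w ᵥ* Bbig = 0}) ↔
    ∀ γ : Fin g, ∀ i j : Fin t, (j : ℕ) < (i : ℕ) →
      (p γ : ZMod (p γ ^ k γ)) ^ (s γ i - s γ j) ∣
        (Q γ * S.map (Int.cast : ℤ → ZMod (p γ ^ k γ)) * (Q γ)⁻¹) i j := by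
  have hcop : Pairwise (Function.onFun Nat.Coprime fun γ => p γ ^ k γ) := fun γ δ h =>
    ((Nat.coprime_primes (hp γ) (hp δ)).2 (hinj.ne h)).pow _ _
  let e := ZMod.prodEquivPi (fun γ => p γ ^ k γ) hcop
  have hBbig : Bbig = blockRow e B := eq_blockRow e
    (fun i γ j => by rw [hB, ZMod.prodEquivPi_apply]; exact (hι γ _).1)
    (fun i γ j δ hδ => by rw [hB, ZMod.prodEquivPi_apply]; exact (hι γ _).2 δ hδ)
  have hnormal (γ : Fin g) : IsPowerDiagonal (p γ : ZMod (p γ ^ k γ)) (k γ) (s γ)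
      (Q γ * B γ * T γ) :=
    let ⟨_, hla, hlt⟩ := hl γ
    ⟨hsk γ, fun i hi => ((hlt i).1 hi).trans_le (hla.trans (min_le_right _ _)), hB0 γ⟩
  have hred (γ : Fin g) : (S.map Int.cast).map (fun x => e x γ) = S.map Int.cast := by
    ext i j
    simp only [map_apply, map_intCast, Pi.intCast_apply]
  have hgeneral := zeroSet_blockMatrix_eq_iff_dvd_general e
    (fun γ => hasExactPowers_natCast_zmod (hp γ).ne_zero (k γ)) hQ hT hnormal
    (isUnit_det_map (Int.castRingHom _) (Int.isUnit_iff.2 hS))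
  simp only [Int.coe_castRingHom, hred, ← hBbig,
    forall_pow_sub_dvd_iff_of_monotone (hmono _)] at hgeneral
  exact SetLike.ext'_iff.symm.trans hgeneral
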